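/- Let X be a complex Hilbert space and let A and B be closed linear relations in X forming a dual pair (A ⊆ B*) such that (A*)_s(f) = B_s(f) for all f ∈ D(B), (B*)_s(f) = A_s(f) for all f ∈ D(A), B*(0) ∩ N(A*) = {0}, and A*(0) ∩ N(B*) = {0}. Let S be the linear relation in X × X defined by S = {((x₁,x₂),(y₁,y₂)) : (x₁,y₂) ∈ B and (x₂,y₁) ∈ A}. Then S is Hermitian and its deficiency indices satisfy n₊(S) = n₋(S) = n(A*,B) = n(B*,A), where n₊(S) = dim N(S* − i) and n₋(S) = dim N(S* + i). -/

import Mathlib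

/-!
Write `S* = {((f₁,f₂),(g₁,g₂)) : (f₁,g₂) ∈ A*, (f₂,g₁) ∈ B*}`. For `c² = -1`, the eigenspace of `S*`
at `c` consists of the `(f₁,f₂)` with `(f₁, c f₂) ∈ A*` and `(c f₂, -f₁) ∈ B*`; the second
condition says that `(f₁, c f₂)` is orthogonal to `B`, so the eigenspace is a copy of the orthogonal
complement `A* ⊖ B` inside the Hilbert space `X × X`. The first coordinate therefore induces a
map from the eigenspace to `D(A*)/D(B)`. It is surjective because `A* = B ⊕ (A* ⊖ B)`, and
injective because `A*(0) = B(0)` (`relMul_adj_le`), so that an element of `A*` over a point of `D(B)`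
lies in `B`. The same holds for both values `c = ±i`, and exchanging the roles
of `A` and `B` only swaps the two coordinates of the eigenspace.

The equality `A*(0) = B(0)`: if `g ∈ A*(0)` is orthogonal to `B(0)`, then `g` is orthogonal to
`B_s(x) = (A*)_s(x)` for all `x ∈ D(B)`, hence to the range of `B`, i.e. `g ∈ N(B*)`; so `g = 0`.
-/

local notation "⟪" x ", " y "⟫" => @inner ℂ _ _ x y

noncomputable section

variable {X : Type*} [NormedAddCommGroup X] [InnerProductSpace ℂ X]

/-- The adjoint `T*` of a linear relation `T ⊆ X × X`:
`T* = {(f,g) : ⟪g,x⟫ = ⟪f,y⟫ for all (x,y) ∈ T}`. -/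
def adjRel (T : Submodule ℂ (X × X)) : Submodule ℂ (X × X) where
  carrier := {p | ∀ q ∈ T, ⟪p.2, q.1⟫ = ⟪p.1, q.2⟫}
  add_mem' := by
    intro p p' hp hp' q hq
    simp only [Prod.fst_add, Prod.snd_add, inner_add_left, hp q hq, hp' q hq]
  zero_mem' := by intro q hq; simp
  smul_mem' := by
    intro c p hp q hq
    simp only [Prod.smul_fst, Prod.smul_snd, inner_smul_left, hp q hq]

/-- The domain `D(T)` of a linear relation. -/
def relDom (T : Submodule ℂ (X × X)) : Submodule ℂ X := T.map (LinearMap.fst ℂ X X)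

/-- The multivalued part `T(0) = {y : (0,y) ∈ T}` of a linear relation. -/
def relMul (T : Submodule ℂ (X × X)) : Submodule ℂ X := T.comap (LinearMap.inr ℂ X X)

/-- The null space `N(T) = {x : (x,0) ∈ T}` of a linear relation. -/
def relKer (T : Submodule ℂ (X × X)) : Submodule ℂ X := T.comap (LinearMap.inl ℂ X X)

/-- The operator part `T_s` of a (closed) linear relation, sending `f ∈ D(T)` to the unique
element of `T(f)` orthogonal to `T(0)` (junk value `0` outside `D(T)`). -/
def opPart (T : Submodule ℂ (X × X)) (f : X) : X :=
  @dite X (∃ y, (f, y) ∈ T ∧ y ∈ (relMul T)ᗮ) (Classical.dec _)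
    (fun h => h.choose) (fun _ => 0)

/-- The composition `S ∘ T = {(x,z) : ∃ y, (x,y) ∈ T and (y,z) ∈ S}` of linear relations. -/
def relComp (S T : Submodule ℂ (X × X)) : Submodule ℂ (X × X) where
  carrier := {p | ∃ y, (p.1, y) ∈ T ∧ (y, p.2) ∈ S}
  add_mem' := by
    rintro p p' ⟨y, h1, h2⟩ ⟨y', h1', h2'⟩
    exact ⟨y + y', T.add_mem h1 h1', S.add_mem h2 h2'⟩
  zero_mem' := ⟨0, T.zero_mem, S.zero_mem⟩
  smul_mem' := by
    rintro c p ⟨y, h1, h2⟩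
    exact ⟨c • y, T.smul_mem c h1, S.smul_mem c h2⟩

/-- `N(1 + R) = {x : (x, -x) ∈ R}` for a linear relation `R`. -/
def relKerOnePlus (R : Submodule ℂ (X × X)) : Submodule ℂ X :=
  R.comap ((LinearMap.id : X →ₗ[ℂ] X).prod (-LinearMap.id))

/-- The dimension of the quotient `U / V` (for submodules `V ⊆ U`). -/
def quotDim (U V : Submodule ℂ X) : Cardinal :=
  Module.rank ℂ (↥U ⧸ V.comap U.subtype)

/-- The relation `S = [[0, A], [B, 0]]` in `X² × X²` associated with a dual pair `{A, B}`:
`S = {((x₁,x₂),(y₁,y₂)) : (x₁,y₂) ∈ B and (x₂,y₁) ∈ A}`. -/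
def dualS (A B : Submodule ℂ (X × X)) : Submodule ℂ ((X × X) × (X × X)) where
  carrier := {p | (p.1.1, p.2.2) ∈ B ∧ (p.1.2, p.2.1) ∈ A}
  add_mem' := by
    rintro p p' ⟨h1, h2⟩ ⟨h1', h2'⟩
    exact ⟨B.add_mem h1 h1', A.add_mem h2 h2'⟩
  zero_mem' := ⟨B.zero_mem, A.zero_mem⟩
  smul_mem' := by
    rintro c p ⟨h1, h2⟩
    exact ⟨B.smul_mem c h1, A.smul_mem c h2⟩

/-- The adjoint of a linear relation in `X × X`, where `X × X` carries the product
inner product `⟪(x₁,x₂),(u₁,u₂)⟫ = ⟪x₁,u₁⟫ + ⟪x₂,u₂⟫`. -/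
def adjRel2 (S : Submodule ℂ ((X × X) × (X × X))) : Submodule ℂ ((X × X) × (X × X)) where
  carrier := {p | ∀ q ∈ S,
    ⟪p.2.1, q.1.1⟫ + ⟪p.2.2, q.1.2⟫ = ⟪p.1.1, q.2.1⟫ + ⟪p.1.2, q.2.2⟫}
  add_mem' := by
    intro p p' hp hp' q hq
    simp only [Prod.fst_add, Prod.snd_add, inner_add_left]
    rw [show ∀ a b c d : ℂ, a + b + (c + d) = a + c + (b + d) by intros; ring,
      hp q hq, hp' q hq]; ring
  zero_mem' := by intro q hq; simp
  smul_mem' := by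
    intro c p hp q hq
    simp only [Prod.smul_fst, Prod.smul_snd, inner_smul_left, ← mul_add, hp q hq]

/-- For a relation `R` on `X × X` and `c : ℂ`, the subspace `{f : (f, c • f) ∈ R}`;
for `R = S*` and `c = ∓i` this is the deficiency space `N(S* ± i)`. -/
def eigenSp (R : Submodule ℂ ((X × X) × (X × X))) (c : ℂ) : Submodule ℂ (X × X) :=
  R.comap ((LinearMap.id : (X × X) →ₗ[ℂ] (X × X)).prod (c • LinearMap.id))

lemma mem_adjRel {T : Submodule ℂ (X × X)} {f g : X} :
    (f, g) ∈ adjRel T ↔ ∀ x y, (x, y) ∈ T → ⟪g, x⟫ = ⟪f, y⟫ :=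
  ⟨fun h x y hxy => h (x, y) hxy, fun h q hq => h q.1 q.2 hq⟩

lemma mem_relDom {T : Submodule ℂ (X × X)} {f : X} : f ∈ relDom T ↔ ∃ g, (f, g) ∈ T := by
  constructor
  · rintro ⟨⟨a, b⟩, h, rfl⟩
    exact ⟨b, h⟩
  · rintro ⟨g, h⟩
    exact ⟨(f, g), h, rfl⟩

lemma mem_relMul {T : Submodule ℂ (X × X)} {g : X} : g ∈ relMul T ↔ (0, g) ∈ T := Iff.rfl

lemma mem_relKer {T : Submodule ℂ (X × X)} {g : X} : g ∈ relKer T ↔ (g, 0) ∈ T := Iff.rfl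

/-- The dual pair condition is symmetric in the two relations. -/
lemma le_adjRel_symm {A B : Submodule ℂ (X × X)} (h : A ≤ adjRel B) : B ≤ adjRel A := by
  rintro ⟨x, y⟩ hxy
  rw [mem_adjRel]
  intro u v huv
  have := mem_adjRel.1 (h huv) x y hxy
  rw [← inner_conj_symm y u, ← inner_conj_symm x v, this]

lemma isClosed_adjRel (T : Submodule ℂ (X × X)) : IsClosed (adjRel T : Set (X × X)) := by
  have : (adjRel T : Set (X × X)) = ⋂ q ∈ T, {p : X × X | ⟪p.2, q.1⟫ = ⟪p.1, q.2⟫} := by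
    ext p
    simp only [Set.mem_iInter]
    rfl
  rw [this]
  refine isClosed_biInter fun q _ => isClosed_eq ?_ ?_ <;> fun_prop

lemma isClosed_relMul {T : Submodule ℂ (X × X)} (hT : IsClosed (T : Set (X × X))) :
    IsClosed (relMul T : Set X) :=
  hT.preimage (f := fun y : X => ((0 : X), y)) (by fun_prop)

/-- For a closed relation the value of `opPart` is never the junk one on the domain. -/
lemma opPart_spec [CompleteSpace X] {T : Submodule ℂ (X × X)} (hT : IsClosed (T : Set (X × X)))
    {f : X} (hf : f ∈ relDom T) : (f, opPart T f) ∈ T ∧ opPart T f ∈ (relMul T)ᗮ := by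
  have hex : ∃ y, (f, y) ∈ T ∧ y ∈ (relMul T)ᗮ := by
    obtain ⟨g, hg⟩ := mem_relDom.1 hf
    have : CompleteSpace (relMul T) := (isClosed_relMul hT).completeSpace_coe
    obtain ⟨y, hy, z, hz, rfl⟩ := (relMul T).exists_add_mem_mem_orthogonal g
    refine ⟨z, ?_, hz⟩
    simpa using T.sub_mem hg (mem_relMul.1 hy)
  have h : opPart T f = hex.choose := by
    unfold opPart
    exact dif_pos hex
  rw [h]
  exact hex.choose_spec

/-- Orthogonal projection onto a closed relation, for the product inner product on `X × X`
(which Mathlib's `X × X`, carrying the sup norm, does not have). -/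
lemma exists_proj [CompleteSpace X] {T : Submodule ℂ (X × X)} (hT : IsClosed (T : Set (X × X)))
    (f g : X) : ∃ x y, (x, y) ∈ T ∧ ∀ u v, (u, v) ∈ T → ⟪f - x, u⟫ + ⟪g - y, v⟫ = 0 := by
  let e := WithLp.linearEquiv 2 ℂ (X × X)
  let K : Submodule ℂ (WithLp 2 (X × X)) := T.comap e.toLinearMap
  have hK : IsClosed (K : Set (WithLp 2 (X × X))) :=
    hT.preimage (WithLp.prod_continuous_ofLp 2 X X)
  have : CompleteSpace K := hK.completeSpace_coe
  obtain ⟨k, hk, z, hz, hkz⟩ := K.exists_add_mem_mem_orthogonal (WithLp.toLp 2 (f, g))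
  refine ⟨k.fst, k.snd, hk, fun u v huv => ?_⟩
  have h := (Submodule.mem_orthogonal' K z).1 hz (WithLp.toLp 2 (u, v)) huv
  rw [WithLp.prod_inner_apply] at h
  have hz' : z = WithLp.toLp 2 (f, g) - k := by rw [hkz]; abel
  rw [hz'] at h
  exact h

/-- The step where the conditions on the operator parts and on `A*(0) ∩ N(B*)` enter. -/
lemma relMul_adj_le [CompleteSpace X] {A B : Submodule ℂ (X × X)}
    (hB : IsClosed (B : Set (X × X))) (hdual : A ≤ adjRel B)
    (hopB : ∀ f ∈ relDom B, opPart (adjRel A) f = opPart B f)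
    (hmul : relMul (adjRel A) ⊓ relKer (adjRel B) = ⊥) :
    relMul (adjRel A) ≤ relMul B := by
  have hBA := le_adjRel_symm hdual
  intro w hw
  have : CompleteSpace (relMul B) := (isClosed_relMul hB).completeSpace_coe
  obtain ⟨b, hb, g, hg, rfl⟩ := (relMul B).exists_add_mem_mem_orthogonal w
  have hgA : g ∈ relMul (adjRel A) := by
    have hbA : b ∈ relMul (adjRel A) := hBA hb
    simpa using (relMul (adjRel A)).sub_mem hw hbA
  have hgK : g ∈ relKer (adjRel B) := by
    rw [mem_relKer, mem_adjRel]
    intro x y hxy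
    have hx : x ∈ relDom B := mem_relDom.2 ⟨y, hxy⟩
    have hs := opPart_spec hB hx
    have hsA := opPart_spec (isClosed_adjRel A) (mem_relDom.2 ⟨y, hBA hxy⟩)
    rw [hopB x hx] at hsA
    -- `y - B_s(x)` lies in `B(0)`, and `B_s(x) = (A*)_s(x)` is orthogonal to `A*(0) ∋ g`.
    have hd : y - opPart B x ∈ relMul B := by
      simpa [mem_relMul] using B.sub_mem hxy hs.1
    have h1 := Submodule.inner_left_of_mem_orthogonal hd hg
    have h2 := Submodule.inner_right_of_mem_orthogonal hgA hsA.2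
    rw [inner_sub_right, h2, sub_zero] at h1
    rw [h1, inner_zero_left]
  have hg0 : g = 0 := by
    have : g ∈ relMul (adjRel A) ⊓ relKer (adjRel B) := ⟨hgA, hgK⟩
    rwa [hmul, Submodule.mem_bot] at this
  rw [hg0, add_zero]
  exact hb

/-- The description of `S*` as the off-diagonal relation built from `A*` and `B*`, at pairs
`(f, c f)`. -/
lemma mem_eigenSp {A B : Submodule ℂ (X × X)} {c : ℂ} {p : X × X} :
    p ∈ eigenSp (adjRel2 (dualS A B)) c ↔
      (p.1, c • p.2) ∈ adjRel A ∧ (p.2, c • p.1) ∈ adjRel B := by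
  have key : p ∈ eigenSp (adjRel2 (dualS A B)) c ↔ ∀ q ∈ dualS A B,
    ⟪c • p.1, q.1.1⟫ + ⟪c • p.2, q.1.2⟫ = ⟪p.1, q.2.1⟫ + ⟪p.2, q.2.2⟫ := Iff.rfl
  rw [key, mem_adjRel, mem_adjRel]
  constructor
  · intro h
    constructor
    · intro x y hxy
      simpa using h ((0, x), (y, 0)) ⟨B.zero_mem, hxy⟩
    · intro x y hxy
      simpa using h ((x, 0), (0, y)) ⟨hxy, A.zero_mem⟩
  · rintro ⟨h1, h2⟩ q ⟨hq1, hq2⟩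
    rw [h1 _ _ hq2, h2 _ _ hq1, add_comm]

lemma dualS_le_adjRel2 {A B : Submodule ℂ (X × X)} (hdual : A ≤ adjRel B) :
    dualS A B ≤ adjRel2 (dualS A B) := by
  rintro p ⟨hp1, hp2⟩ q ⟨hq1, hq2⟩
  have h1 := mem_adjRel.1 (hdual hp2) _ _ hq1
  have h2 := mem_adjRel.1 (le_adjRel_symm hdual hp1) _ _ hq2
  rw [h1, h2, add_comm]

/-- For `c² = -1`, the first coordinate identifies the eigenspace of `S*` at `c` with
`D(A*)/D(B)`. -/
lemma rank_eigenSp [CompleteSpace X] {A B : Submodule ℂ (X × X)}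
    (hB : IsClosed (B : Set (X × X))) (hdual : A ≤ adjRel B)
    (hopB : ∀ f ∈ relDom B, opPart (adjRel A) f = opPart B f)
    (hmul : relMul (adjRel A) ⊓ relKer (adjRel B) = ⊥) {c : ℂ} (hc : c * c = -1) :
    Module.rank ℂ ↥(eigenSp (adjRel2 (dualS A B)) c) =
      quotDim (relDom (adjRel A)) (relDom B) := by
  have hBA := le_adjRel_symm hdual
  have hc0 : c ≠ 0 := by
    rintro rfl
    simp at hc
  -- The conjugate of a square root of `-1` is its negative.
  have hcc : (starRingEnd ℂ) c = -c := by
    have hcI : c = Complex.I ∨ c = -Complex.I := by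
      rw [← mul_self_eq_mul_self_iff, hc, Complex.I_mul_I]
    rcases hcI with rfl | rfl <;> simp
  let φ : eigenSp (adjRel2 (dualS A B)) c →ₗ[ℂ] relDom (adjRel A) :=
    ((LinearMap.fst ℂ X X).comp (Submodule.subtype _)).codRestrict (relDom (adjRel A))
      (fun p => mem_relDom.2 ⟨_, (mem_eigenSp.1 p.2).1⟩)
  let ψ := ((relDom B).comap (relDom (adjRel A)).subtype).mkQ.comp φ
  have hψ : Function.Bijective ψ := by
    constructor
    · rw [← LinearMap.ker_eq_bot, LinearMap.ker_eq_bot']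
      rintro ⟨⟨f, h⟩, hp⟩ h0
      have hf : f ∈ relDom B :=
        (Submodule.Quotient.mk_eq_zero
          ((relDom B).comap (relDom (adjRel A)).subtype)).1 h0
      obtain ⟨h1, h2⟩ := mem_eigenSp.1 hp
      obtain ⟨g, hg⟩ := mem_relDom.1 hf
      have hd : c • h - g ∈ relMul B := by
        apply relMul_adj_le hB hdual hopB hmul
        simpa [mem_relMul] using (adjRel A).sub_mem h1 (hBA hg)
      have hfB : (f, c • h) ∈ B := by
        simpa using B.add_mem hg (mem_relMul.1 hd)
      -- `(f, c h)` lies in `B` and is orthogonal to `B`, so it vanishes.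
      have h3 := mem_adjRel.1 h2 _ _ hfB
      simp only [inner_smul_left, inner_smul_right, hcc] at h3
      have h4 : ⟪f, f⟫ + ⟪h, h⟫ = 0 := by
        have : c * (⟪f, f⟫ + ⟪h, h⟫) = 0 := by linear_combination -h3
        exact (mul_eq_zero.1 this).resolve_left hc0
      rw [inner_self_eq_norm_sq_to_K, inner_self_eq_norm_sq_to_K] at h4
      have h5 : ‖f‖ ^ 2 + ‖h‖ ^ 2 = 0 := by
        apply Complex.ofReal_eq_zero.1
        push_cast
        exact h4
      have hf0 : f = 0 := by
        rw [← norm_eq_zero]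
        nlinarith [sq_nonneg ‖f‖, sq_nonneg ‖h‖]
      have hh0 : h = 0 := by
        rw [← norm_eq_zero]
        nlinarith [sq_nonneg ‖f‖, sq_nonneg ‖h‖]
      subst hf0 hh0
      rfl
    · intro z
      obtain ⟨⟨f, hf⟩, rfl⟩ := Submodule.Quotient.mk_surjective _ z
      obtain ⟨g, hg⟩ := mem_relDom.1 hf
      obtain ⟨x, y, hxy, hort⟩ := exists_proj hB f g
      -- Since `c⁻¹ = -c`, this is the eigenvector with `(f₁, c f₂) = (f - x, g - y)`.
      have hmem : (f - x, -c • (g - y)) ∈ eigenSp (adjRel2 (dualS A B)) c := by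
        rw [mem_eigenSp]
        constructor
        · have : c • (-c • (g - y)) = g - y := by
            rw [smul_smul, mul_neg, hc, neg_neg, one_smul]
          simp only [this]
          exact (adjRel A).sub_mem hg (hBA hxy)
        · rw [mem_adjRel]
          intro u v huv
          have := hort u v huv
          simp only [inner_smul_left, hcc, map_neg]
          linear_combination (-c) * this
      refine ⟨⟨_, hmem⟩, ?_⟩
      refine (Submodule.Quotient.eq _).2 ?_
      change f - x - f ∈ relDom B
      rw [sub_sub_cancel_left]
      exact (relDom B).neg_mem (mem_relDom.2 ⟨y, hxy⟩)
  exact (LinearEquiv.ofBijective ψ hψ).rank_eq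

lemma rank_eigenSp_swap (A B : Submodule ℂ (X × X)) (c : ℂ) :
    Module.rank ℂ ↥(eigenSp (adjRel2 (dualS A B)) c) =
      Module.rank ℂ ↥(eigenSp (adjRel2 (dualS B A)) c) := by
  have h : eigenSp (adjRel2 (dualS B A)) c =
      (eigenSp (adjRel2 (dualS A B)) c).map (LinearEquiv.prodComm ℂ X X).toLinearMap := by
    ext ⟨f, g⟩
    constructor
    · intro hp
      exact ⟨(g, f), mem_eigenSp.2 (mem_eigenSp.1 hp).symm, rfl⟩
    · rintro ⟨⟨a, b⟩, hab, heq⟩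
      obtain ⟨rfl, rfl⟩ := Prod.mk.inj heq
      exact mem_eigenSp.2 (mem_eigenSp.1 hab).symm
  rw [h]
  exact ((LinearEquiv.prodComm ℂ X X).submoduleMap _).rank_eq

/-- Proposition 2.10(i). Under the stated hypotheses `S = [[0,A],[B,0]]`
is Hermitian and `n₊(S) = n₋(S) = n(A*,B) = n(B*,A)`, where `n₊(S) = dim N(S* - i)` and
`n₋(S) = dim N(S* + i)`, with `N(S* ∓ i) = {f : (f, ±i·f) ∈ S*}`. -/
theorem dualS_deficiency_indices [CompleteSpace X] (A B : Submodule ℂ (X × X))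
    (hA : IsClosed (A : Set (X × X))) (hB : IsClosed (B : Set (X × X)))
    (hdual : A ≤ adjRel B)
    (hopB : ∀ f ∈ relDom B, opPart (adjRel A) f = opPart B f)
    (hopA : ∀ f ∈ relDom A, opPart (adjRel B) f = opPart A f)
    (hmul1 : relMul (adjRel B) ⊓ relKer (adjRel A) = ⊥)
    (hmul2 : relMul (adjRel A) ⊓ relKer (adjRel B) = ⊥) :
    dualS A B ≤ adjRel2 (dualS A B) ∧
    Module.rank ℂ ↥(eigenSp (adjRel2 (dualS A B)) Complex.I) =
      Module.rank ℂ ↥(eigenSp (adjRel2 (dualS A B)) (-Complex.I)) ∧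
    Module.rank ℂ ↥(eigenSp (adjRel2 (dualS A B)) (-Complex.I)) =
      quotDim (relDom (adjRel A)) (relDom B) ∧
    quotDim (relDom (adjRel A)) (relDom B) = quotDim (relDom (adjRel B)) (relDom A) := by
  have hI : Complex.I * Complex.I = -1 := Complex.I_mul_I
  have hI' : -Complex.I * -Complex.I = -1 := by rw [neg_mul_neg, hI]
  have hp := rank_eigenSp hB hdual hopB hmul2 hI
  have hm := rank_eigenSp hB hdual hopB hmul2 hI'
  have hm' := rank_eigenSp hA (le_adjRel_symm hdual) hopA hmul1 hI'
  exact ⟨dualS_le_adjRel2 hdual, hp.trans hm.symm, hm,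
    hm.symm.trans ((rank_eigenSp_swap A B _).trans hm')⟩

end
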